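/- arXiv:1212.0373 — 6 statements merged into one kernel-verified Lean document; each statement's English description precedes it below -/
import Mathlib

section
/- Let S be a finitely generated additive commutative monoid. Inside the space Hom(S, ℝ≥0∞) of additive monoid homomorphisms from S to (ℝ≥0∞, +), with the topology of pointwise convergence, the subset of homomorphisms all of whose values are finite (i.e. f(s) ≠ ∞ for every s ∈ S) is an open subset. -/
open scoped ENNReal

/-- For a finitely generated additive commutative monoid `S`, inside the
space `Hom(S, ℝ≥0∞)` of additive monoid homomorphisms (with the topology of pointwise
convergence, i.e. the subspace topology from the product space `S → ℝ≥0∞`), the subset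
of homomorphisms all of whose values are finite is open. -/
theorem stmt1 (S : Type*) [AddCommMonoid S] [AddMonoid.FG S] :
    IsOpen {f : {f : S → ℝ≥0∞ // f 0 = 0 ∧ ∀ a b : S, f (a + b) = f a + f b} |
      ∀ s : S, f.1 s ≠ ∞} := by
  obtain ⟨T, hT⟩ := (AddMonoid.FG.fg_top : (⊤ : AddSubmonoid S).FG)
  have key : {f : {f : S → ℝ≥0∞ // f 0 = 0 ∧ ∀ a b : S, f (a + b) = f a + f b} |
      ∀ s : S, f.1 s ≠ ∞} = ⋂ t ∈ T, {f | f.1 t ≠ ∞} := by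
    ext f
    simp only [Set.mem_setOf_eq, Set.mem_iInter]
    refine ⟨fun h t _ => h t, fun h s => ?_⟩
    have hs : s ∈ AddSubmonoid.closure (T : Set S) := by
      rw [hT]; trivial
    induction hs using AddSubmonoid.closure_induction with
    | mem x hx => exact h x hx
    | zero => rw [f.2.1]; exact ENNReal.zero_ne_top
    | add x y _ _ hx hy => rw [f.2.2]; exact ENNReal.add_ne_top.2 ⟨hx, hy⟩
  rw [key]
  refine isOpen_biInter_finset fun t _ => ?_
  exact isOpen_ne.preimage ((continuous_apply t).comp continuous_subtype_val)
end

section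
/- Let n be a natural number and let S be a finitely generated additive submonoid of ℤⁿ (the additive group of functions Fin n → ℤ). Inside the space Hom(S, ℝ≥0∞) of additive monoid homomorphisms from S to (ℝ≥0∞, +), with the topology of pointwise convergence, the subset of homomorphisms all of whose values are finite is dense. -/
open scoped ENNReal

/-- Integral Farkas lemma following Bartl. -/
theorem farkas_aux {V ι : Type*} [AddCommGroup V] [DecidableEq ι] (s : Finset ι) :
    ∀ (a : ι → V →+ ℤ) (γ : V →+ ℤ), (∀ x, (∀ i ∈ s, a i x ≤ 0) → γ x ≤ 0) →
      ∃ N : ℤ, 0 < N ∧ ∃ l : ι → ℤ, (∀ i, 0 ≤ l i) ∧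
        ∀ x, N * γ x = ∑ i ∈ s, l i * a i x := by
  induction s using Finset.induction_on with
  | empty =>
    intro a γ h
    refine ⟨1, one_pos, 0, fun _ => le_rfl, fun x => ?_⟩
    have h1 := h x (by simp)
    have h2 := h (-x) (by simp)
    simp at h2 ⊢
    omega
  | insert m s hm ih =>
    intro a γ h
    by_cases hs : ∀ x, (∀ i ∈ s, a i x ≤ 0) → γ x ≤ 0
    · obtain ⟨N, hN, l, hl, e⟩ := ih a γ hs
      refine ⟨N, hN, fun i => if i = m then 0 else l i, fun i => ?_, fun x => ?_⟩
      · dsimp only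
        split_ifs
        · exact le_rfl
        · exact hl i
      · rw [e x, Finset.sum_insert hm]
        simp only [if_true, zero_mul, zero_add]
        refine Finset.sum_congr rfl fun i hi => ?_
        rw [if_neg (ne_of_mem_of_not_mem hi hm)]
    · push Not at hs
      obtain ⟨y, hy, hγ⟩ := hs
      have hc : 0 < a m y := by
        by_contra hc
        have := h y (fun i hi => by
          rcases Finset.mem_insert.1 hi with rfl | hi
          · omega
          · exact hy i hi)
        omega
      let p : V →+ V :=
        { toFun := fun x => a m y • x - a m x • y
          map_zero' := by simp
          map_add' := fun u v => by simp only [map_add, smul_add, add_smul]; abel }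
      have hp : ∀ (φ : V →+ ℤ) x, φ (p x) = a m y * φ x - a m x * φ y := by
        intro φ x
        simp [p]
      obtain ⟨N, hN, l, hl, e⟩ := ih (fun i => (a i).comp p) (γ.comp p) (by
        intro x hx
        refine h (p x) fun i hi => ?_
        rcases Finset.mem_insert.1 hi with rfl | hi
        · rw [hp]
          exact le_of_eq (by ring)
        · exact hx i hi)
      refine ⟨N * a m y, mul_pos hN hc, fun i => if i = m then
        N * γ y - ∑ i ∈ s, l i * a i y else l i * a m y, fun i => ?_, fun x => ?_⟩
      · dsimp only
        split_ifs
        · have h1 : ∑ i ∈ s, l i * a i y ≤ 0 :=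
            Finset.sum_nonpos fun i hi => mul_nonpos_of_nonneg_of_nonpos (hl i) (hy i hi)
          have h2 := mul_pos hN hγ
          linarith
        · exact mul_nonneg (hl i) hc.le
      · have e1 := e x
        simp only [AddMonoidHom.comp_apply, hp] at e1
        rw [Finset.sum_insert hm]
        simp only [if_true]
        have e2 : ∑ i ∈ s, (if i = m then N * γ y - ∑ i ∈ s, l i * a i y else l i * a m y) * a i x
            = ∑ i ∈ s, (l i * a m y) * a i x :=
          Finset.sum_congr rfl fun i hi => by rw [if_neg (ne_of_mem_of_not_mem hi hm)]
        rw [e2]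
        have e3 : ∑ i ∈ s, l i * (a m y * a i x - a m x * a i y)
            = ∑ i ∈ s, (l i * a m y) * a i x - a m x * ∑ i ∈ s, l i * a i y := by
          rw [Finset.mul_sum, ← Finset.sum_sub_distrib]
          exact Finset.sum_congr rfl fun i _ => by ring
        rw [e3] at e1
        linarith

theorem face_gen_aux {n : ℕ} (T : Finset (Fin n → ℤ)) (F : AddSubmonoid (Fin n → ℤ))
    (hF : ∀ a ∈ AddSubmonoid.closure (T : Set (Fin n → ℤ)),
      ∀ b ∈ AddSubmonoid.closure (T : Set (Fin n → ℤ)), a + b ∈ F → a ∈ F)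
    (hFS : F ≤ AddSubmonoid.closure (T : Set (Fin n → ℤ)))
    (j : Fin n → ℤ) (hj : j ∈ T) (hjF : j ∉ F) :
    ∃ g : (Fin n → ℤ) →+ ℤ, (∀ v ∈ T, 0 ≤ g v) ∧ (∀ v ∈ T, v ∈ F → g v = 0) ∧ 0 < g j := by
  classical
  by_contra hcon
  push Not at hcon
  let s : Finset (Fin n → ℤ) := T ∪ (T.filter (· ∈ F)).image (fun v => -v)
  let ev : (Fin n → ℤ) → ((Fin n → ℤ) →+ ℤ) →+ ℤ := fun v => AddMonoidHom.eval v
  have hev : ∀ v φ, ev v φ = φ v := fun v φ => rfl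
  obtain ⟨N, hN, l, hl, e⟩ := farkas_aux s (fun v => - ev v) (ev j) (by
    intro x hx
    have hx' : ∀ v ∈ s, 0 ≤ x v := by
      intro v hv
      have := hx v hv
      simp only [AddMonoidHom.neg_apply, hev] at this
      omega
    rw [hev]
    refine hcon x (fun v hv => hx' v (Finset.mem_union_left _ hv)) fun v hv hvF => ?_
    have h1 := hx' v (Finset.mem_union_left _ hv)
    have h2 := hx' (-v) (Finset.mem_union_right _
      (Finset.mem_image_of_mem _ (Finset.mem_filter.2 ⟨hv, hvF⟩)))
    rw [map_neg] at h2
    omega)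
  have e' : N • j + ∑ v ∈ s, l v • v = 0 := by
    ext i
    have := e (Pi.evalAddMonoidHom (fun _ => ℤ) i)
    simp only [AddMonoidHom.neg_apply, hev, Pi.evalAddMonoidHom_apply, mul_neg,
      Finset.sum_neg_distrib] at this
    simp only [Pi.add_apply, Pi.smul_apply, Finset.sum_apply, smul_eq_mul, Pi.zero_apply]
    omega
  set S := AddSubmonoid.closure (T : Set (Fin n → ℤ)) with hS
  let D : AddSubmonoid (Fin n → ℤ) :=
    { carrier := {x | ∃ t ∈ F, x + t ∈ S}
      zero_mem' := ⟨0, F.zero_mem, by simp⟩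
      add_mem' := by
        rintro x y ⟨t, ht, h1⟩ ⟨u, hu, h2⟩
        refine ⟨t + u, F.add_mem ht hu, ?_⟩
        rw [add_add_add_comm]
        exact S.add_mem h1 h2 }
  have hD : ∑ v ∈ s, l v • v ∈ D := by
    refine sum_mem fun v hv => ?_
    have hvD : v ∈ D := by
      rcases Finset.mem_union.1 hv with hv | hv
      · exact ⟨0, F.zero_mem, by simpa using AddSubmonoid.subset_closure hv⟩
      · obtain ⟨w, hw, rfl⟩ := Finset.mem_image.1 hv
        exact ⟨w, (Finset.mem_filter.1 hw).2, by simp⟩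
    obtain ⟨k, hk⟩ := Int.eq_ofNat_of_zero_le (hl v)
    rw [hk, natCast_zsmul]
    exact D.nsmul_mem hvD k
  obtain ⟨t, ht, hts⟩ := hD
  obtain ⟨k, hk⟩ := Int.eq_ofNat_of_zero_le (by omega : 0 ≤ N - 1)
  have hjS : j ∈ S := AddSubmonoid.subset_closure hj
  refine hjF (hF j hjS (k • j + (∑ v ∈ s, l v • v + t)) (S.add_mem (S.nsmul_mem hjS k) hts) ?_)
  have hN' : N = (k : ℤ) + 1 := by omega
  rw [hN', add_smul, one_smul, natCast_zsmul] at e'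
  have : j + (k • j + (∑ v ∈ s, l v • v + t)) = t := by
    calc _ = (k • j + j + ∑ v ∈ s, l v • v) + t := by abel
      _ = t := by rw [e', zero_add]
  rw [this]
  exact ht

theorem face_aux {n : ℕ} (T : Finset (Fin n → ℤ)) (F : AddSubmonoid (Fin n → ℤ))
    (hF : ∀ a ∈ AddSubmonoid.closure (T : Set (Fin n → ℤ)),
      ∀ b ∈ AddSubmonoid.closure (T : Set (Fin n → ℤ)), a + b ∈ F → a ∈ F)
    (hFS : F ≤ AddSubmonoid.closure (T : Set (Fin n → ℤ))) :
    ∃ g : (Fin n → ℤ) →+ ℤ, ∀ v ∈ AddSubmonoid.closure (T : Set (Fin n → ℤ)),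
      (v ∈ F → g v = 0) ∧ (v ∉ F → 0 < g v) := by
  classical
  have key : ∀ j : Fin n → ℤ, ∃ g : (Fin n → ℤ) →+ ℤ, (∀ v ∈ T, 0 ≤ g v) ∧
      (∀ v ∈ T, v ∈ F → g v = 0) ∧ (j ∈ T → j ∉ F → 0 < g j) := by
    intro j
    by_cases h : j ∈ T ∧ j ∉ F
    · obtain ⟨g, h1, h2, h3⟩ := face_gen_aux T F hF hFS j h.1 h.2
      exact ⟨g, h1, h2, fun _ _ => h3⟩
    · exact ⟨0, by simp, by simp, fun h1 h2 => absurd ⟨h1, h2⟩ h⟩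
  choose G h1 h2 h3 using key
  have hg : ∀ v, (∑ j ∈ T, G j) v = ∑ j ∈ T, G j v := fun v => by
    rw [AddMonoidHom.finsetSum_apply]
  refine ⟨∑ j ∈ T, G j, fun v hv => ?_⟩
  induction hv using AddSubmonoid.closure_induction with
  | mem v hv =>
    rw [hg]
    refine ⟨fun h => Finset.sum_eq_zero fun j _ => h2 j v hv h, fun h => ?_⟩
    exact Finset.sum_pos' (fun j _ => h1 j v hv) ⟨v, hv, h3 v hv h⟩
  | zero => exact ⟨fun _ => map_zero _, fun h => absurd F.zero_mem h⟩
  | add a b ha hb iha ihb =>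
    rw [map_add]
    refine ⟨fun h => ?_, fun h => ?_⟩
    · rw [iha.1 (hF a ha b hb h), ihb.1 (hF b hb a ha (by rwa [add_comm])), add_zero]
    · by_cases haF : a ∈ F
      · have hbF : b ∉ F := fun hbF => h (F.add_mem haF hbF)
        have := iha.1 haF
        have := ihb.2 hbF
        omega
      · have := iha.2 haF
        by_cases hbF : b ∈ F
        · have := ihb.1 hbF
          omega
        · have := ihb.2 hbF
          omega

theorem extend_aux {A : Type} [AddCommGroup A] (F : AddSubmonoid A) (f : F →+ ℝ) :
    ∃ h : A →+ ℝ, ∀ x : F, h x = f x := by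
  let i := Algebra.GrothendieckAddGroup.lift F.subtype
  have hi : Function.Injective i := by
    rw [injective_iff_map_eq_zero]
    intro x hx
    simp only [i] at hx
    rw [Algebra.GrothendieckAddGroup.lift_apply, sub_eq_zero] at hx
    have h1 := Subtype.ext hx
    have h2 := (AddLocalization.addMonoidOf (⊤ : AddSubmonoid F)).sec_spec x
    rw [h1] at h2
    exact add_eq_right.1 h2
  obtain ⟨h, hh⟩ := (Module.Baer.of_divisible ℝ).extension_property_addMonoidHom i hi
    (Algebra.GrothendieckAddGroup.lift f)
  refine ⟨h, fun x => ?_⟩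
  have e1 := DFunLike.congr_fun (Algebra.GrothendieckAddGroup.lift.symm_apply_apply F.subtype) x
  have e2 := DFunLike.congr_fun (Algebra.GrothendieckAddGroup.lift.symm_apply_apply f) x
  rw [Algebra.GrothendieckAddGroup.lift_symm_apply] at e1 e2
  rw [← e2, ← hh]
  simp only [AddMonoidHom.comp_apply] at e1 ⊢
  exact congrArg h e1.symm

/-- For a finitely generated additive submonoid `S` of `ℤⁿ`, inside the
space `Hom(S, ℝ≥0∞)` of additive monoid homomorphisms (with the topology of pointwise
convergence), the subset of homomorphisms all of whose values are finite is dense. -/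
theorem stmt2 (n : ℕ) (S : AddSubmonoid (Fin n → ℤ)) (hS : S.FG) :
    Dense {f : {f : S → ℝ≥0∞ // f 0 = 0 ∧ ∀ a b : S, f (a + b) = f a + f b} |
      ∀ s : S, f.1 s ≠ ∞} := by
  classical
  obtain ⟨T, rfl⟩ := hS
  set S := AddSubmonoid.closure (T : Set (Fin n → ℤ)) with hS
  rintro ⟨f, f0, fa⟩
  let F : AddSubmonoid (Fin n → ℤ) :=
    { carrier := {x | ∃ h : x ∈ S, f ⟨x, h⟩ ≠ ∞}
      zero_mem' := ⟨S.zero_mem, by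
        have : (⟨0, S.zero_mem⟩ : S) = 0 := rfl
        rw [this, f0]; simp⟩
      add_mem' := by
        rintro x y ⟨hx, h1⟩ ⟨hy, h2⟩
        refine ⟨S.add_mem hx hy, ?_⟩
        have := fa ⟨x, hx⟩ ⟨y, hy⟩
        rw [AddMemClass.mk_add_mk] at this
        rw [this]
        exact ENNReal.add_ne_top.2 ⟨h1, h2⟩ }
  have hFS : F ≤ S := fun x hx => hx.1
  have hF : ∀ a ∈ S, ∀ b ∈ S, a + b ∈ F → a ∈ F := by
    rintro a ha b hb ⟨h, h1⟩
    refine ⟨ha, ?_⟩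
    have := fa ⟨a, ha⟩ ⟨b, hb⟩
    rw [AddMemClass.mk_add_mk] at this
    rw [this] at h1
    exact (ENNReal.add_ne_top.1 h1).1
  obtain ⟨g, hg⟩ := face_aux T F hF hFS
  obtain ⟨h, hh⟩ := extend_aux F
    { toFun := fun x => (f ⟨x.1, hFS x.2⟩).toReal
      map_zero' := by
        have : (⟨((0 : F) : Fin n → ℤ), hFS (0 : F).2⟩ : S) = 0 := rfl
        rw [this, f0]; simp
      map_add' := fun x y => by
        rw [← ENNReal.toReal_add x.2.2 y.2.2, ← fa]
        rfl }
  have hh' : ∀ (x : S), x.1 ∈ F → h x = (f x).toReal := fun x hx => hh ⟨x, hx⟩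
  have hlim : ∀ v ∈ S, v ∉ F →
      Filter.Tendsto (fun k : ℕ => h v + k * (g v : ℝ)) Filter.atTop Filter.atTop := by
    intro v hv hvF
    refine Filter.tendsto_atTop_add_const_left _ _ ?_
    refine Filter.Tendsto.atTop_mul_const ?_ tendsto_natCast_atTop_atTop
    exact_mod_cast (hg v hv).2 hvF
  have hev : ∀ᶠ k : ℕ in Filter.atTop, ∀ v ∈ T, 0 ≤ h v + k * (g v : ℝ) := by
    rw [Filter.eventually_all_finset]
    intro v hv
    have hvS : v ∈ S := AddSubmonoid.subset_closure hv
    by_cases hvF : v ∈ F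
    · refine Filter.Eventually.of_forall fun k => ?_
      rw [(hg v hvS).1 hvF, hh' ⟨v, hvS⟩ hvF]
      simp
    · exact (hlim v hvS hvF).eventually_ge_atTop 0
  obtain ⟨K, hK⟩ := Filter.eventually_atTop.1 hev
  have hpos : ∀ k : ℕ, ∀ v ∈ S, 0 ≤ h v + ((k + K : ℕ) : ℝ) * (g v : ℝ) := by
    intro k v hv
    induction hv using AddSubmonoid.closure_induction with
    | mem v hv => exact hK _ (Nat.le_add_left _ _) v hv
    | zero => simp
    | add a b _ _ iha ihb =>
      rw [map_add, map_add]
      push_cast at iha ihb ⊢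
      linarith
  let u : ℕ → {f : S → ℝ≥0∞ // f 0 = 0 ∧ ∀ a b : S, f (a + b) = f a + f b} := fun k =>
    ⟨fun s => ENNReal.ofReal (h s + ((k + K : ℕ) : ℝ) * (g s : ℝ)), by simp, fun a b => by
      rw [← ENNReal.ofReal_add (hpos k a a.2) (hpos k b b.2)]
      dsimp only
      congr 1
      rw [AddSubmonoid.coe_add, map_add, map_add]
      push_cast
      ring⟩
  refine mem_closure_of_tendsto (f := u) (b := Filter.atTop) ?_
    (Filter.Eventually.of_forall fun k s => ENNReal.ofReal_ne_top)
  rw [tendsto_subtype_rng, tendsto_pi_nhds]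
  intro s
  by_cases hs : s.1 ∈ F
  · have : ∀ k, (u k).1 s = f s := fun k => by
      simp only [u]
      rw [(hg s s.2).1 hs, hh' s hs, Int.cast_zero, mul_zero, add_zero]
      exact ENNReal.ofReal_toReal hs.2
    simp only [this]
    exact tendsto_const_nhds
  · have hfs : f s = ∞ := by
      by_contra hne
      exact hs ⟨s.2, hne⟩
    simp only [hfs]
    exact ENNReal.tendsto_ofReal_atTop.comp
      ((hlim s s.2 hs).comp (Filter.tendsto_add_atTop_nat K))
end

section
/- Let E be a finite-dimensional real normed vector space and let C ⊆ E be a convex set. Then for every point x ∈ C there exists exactly one set F ⊆ E such that F is convex, F is an extreme subset of C, and x lies in the intrinsic (relative) interior of F. Consequently, C is the disjoint union of the relative interiors of its faces. -/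
theorem relint_iff {E : Type*} [NormedAddCommGroup E] [NormedSpace ℝ E] (F : Set E) (x : E) :
    x ∈ intrinsicInterior ℝ F ↔ x ∈ affineSpan ℝ F ∧
      ∃ δ > 0, ∀ z ∈ affineSpan ℝ F, dist z x < δ → z ∈ F := by
  rw [mem_intrinsicInterior]
  constructor
  · rintro ⟨y, hy, rfl⟩
    rw [mem_interior_iff_mem_nhds, Metric.mem_nhds_iff] at hy
    obtain ⟨δ, hδ, h⟩ := hy
    refine ⟨y.2, δ, hδ, fun z hz hd => ?_⟩
    exact h (show (⟨z, hz⟩ : affineSpan ℝ F) ∈ Metric.ball y δ from hd)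
  · rintro ⟨hx, δ, hδ, h⟩
    refine ⟨⟨x, hx⟩, ?_, rfl⟩
    rw [mem_interior_iff_mem_nhds, Metric.mem_nhds_iff]
    exact ⟨δ, hδ, fun z hz => h z z.2 hz⟩

/-- Accessibility lemma: an open segment from a relative interior point to a point of the set
stays in the relative interior. -/
theorem relint_segment {E : Type*} [NormedAddCommGroup E] [NormedSpace ℝ E] {F : Set E}
    (hF : Convex ℝ F) {p q x : E} (hp : p ∈ intrinsicInterior ℝ F) (hq : q ∈ F)
    (hx : x ∈ openSegment ℝ p q) : x ∈ intrinsicInterior ℝ F := by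
  have hpF : p ∈ F := intrinsicInterior_subset hp
  have hxF : x ∈ F := hF.openSegment_subset hpF hq hx
  obtain ⟨a, b, ha, hb, hab, rfl⟩ := hx
  rw [relint_iff] at hp ⊢
  obtain ⟨-, δ, hδ, h⟩ := hp
  refine ⟨subset_affineSpan ℝ F hxF, a * δ, by positivity, fun z hz hd => ?_⟩
  have hp' := h (AffineMap.lineMap q z a⁻¹)
    (AffineMap.lineMap_mem a⁻¹ (subset_affineSpan ℝ F hq) hz) (by
      have hb' : b = 1 - a := by linarith
      have : AffineMap.lineMap q z a⁻¹ - p = a⁻¹ • (z - (a • p + b • q)) := by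
        rw [AffineMap.lineMap_apply_module, hb']
        match_scalars <;> field_simp
        ring
      rw [dist_eq_norm, this, norm_smul, Real.norm_of_nonneg (by positivity), ← dist_eq_norm,
        inv_mul_lt_iff₀ ha]
      exact hd)
  have := hF hp' hq ha.le hb.le hab
  convert this using 1
  have hb' : b = 1 - a := by linarith
  rw [AffineMap.lineMap_apply_module, hb']
  match_scalars <;> field_simp
  ring

/-- From a relative interior point one can move slightly beyond, away from any point of the set. -/
theorem relint_extend {E : Type*} [NormedAddCommGroup E] [NormedSpace ℝ E] {F : Set E}
    {x y : E} (hx : x ∈ intrinsicInterior ℝ F) (hy : y ∈ F) :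
    ∃ z ∈ F, x ∈ openSegment ℝ y z := by
  rw [relint_iff] at hx
  obtain ⟨hxs, δ, hδ, h⟩ := hx
  have hn : 0 < ‖x - y‖ + 1 := by positivity
  set ε := δ / (‖x - y‖ + 1) with hε
  have hε0 : 0 < ε := by positivity
  refine ⟨AffineMap.lineMap x y (-ε), h _
    (AffineMap.lineMap_mem _ hxs (subset_affineSpan ℝ F hy)) ?_,
    ε / (1 + ε), 1 / (1 + ε), by positivity, by positivity, by field_simp; ring, ?_⟩
  · have : AffineMap.lineMap x y (-ε) - x = ε • (x - y) := by
      rw [AffineMap.lineMap_apply_module]; module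
    rw [dist_eq_norm, this, norm_smul, Real.norm_of_nonneg hε0.le, hε, div_mul_eq_mul_div,
      div_lt_iff₀ hn]
    nlinarith
  · rw [AffineMap.lineMap_apply_module]
    match_scalars <;> field_simp <;> ring

theorem relint_face_subset {E : Type*} [NormedAddCommGroup E] [NormedSpace ℝ E] {C F G : Set E}
    {x : E} (hF : IsExtreme ℝ C F) (hG : IsExtreme ℝ C G) (hxF : x ∈ intrinsicInterior ℝ F)
    (hxG : x ∈ G) : F ⊆ G := by
  intro y hy
  obtain ⟨z, hz, hxz⟩ := relint_extend hxF hy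
  exact hG.left_mem_of_mem_openSegment (hF.subset hy) (hF.subset hz) hxG hxz

/-- The minimal face of `C` at `x`. -/
def minFace {E : Type*} [NormedAddCommGroup E] [NormedSpace ℝ E] (C : Set E) (x : E) : Set E :=
  {y | y ∈ C ∧ ∃ ε : ℝ, 0 < ε ∧ x + ε • (x - y) ∈ C}

theorem minFace_shrink {E : Type*} [NormedAddCommGroup E] [NormedSpace ℝ E] {C : Set E}
    (hC : Convex ℝ C) {x y : E} (hx : x ∈ C) {ε δ : ℝ} (hδ : 0 < δ) (hle : δ ≤ ε)
    (h : x + ε • (x - y) ∈ C) : x + δ • (x - y) ∈ C := by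
  have hε : 0 < ε := hδ.trans_le hle
  have := hC hx h (a := 1 - δ / ε) (b := δ / ε)
    (by rw [sub_nonneg, div_le_one hε]; exact hle) (by positivity) (by ring)
  convert this using 1
  match_scalars <;> field_simp <;> ring

theorem minFace_convex {E : Type*} [NormedAddCommGroup E] [NormedSpace ℝ E] {C : Set E}
    (hC : Convex ℝ C) {x : E} (hx : x ∈ C) : Convex ℝ (minFace C x) := by
  rintro y ⟨hy, ε, hε, h⟩ z ⟨hz, δ, hδ, h'⟩ a b ha hb hab
  refine ⟨hC hy hz ha hb hab, min ε δ, lt_min hε hδ, ?_⟩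
  have h1 := minFace_shrink hC hx (lt_min hε hδ) (min_le_left _ _) h
  have h2 := minFace_shrink hC hx (lt_min hε hδ) (min_le_right _ _) h'
  have := hC h1 h2 ha hb hab
  convert this using 1
  have hb' : b = 1 - a := by linarith
  rw [hb']
  module

theorem minFace_extreme {E : Type*} [NormedAddCommGroup E] [NormedSpace ℝ E] {C : Set E}
    (hC : Convex ℝ C) (x : E) : IsExtreme ℝ C (minFace C x) := by
  refine ⟨fun y hy => hy.1, ?_⟩
  rintro u hu v hv y ⟨hy, ε, hε, h⟩ ⟨a, b, ha, hb, hab, rfl⟩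
  have hpos : 0 < 1 + ε * b := by positivity
  refine ⟨hu, ε * a / (1 + ε * b), by positivity, ?_⟩
  have := hC h hv (a := 1 / (1 + ε * b)) (b := ε * b / (1 + ε * b)) (by positivity)
    (by positivity) (by field_simp)
  convert this using 1
  have ha' : a = 1 - b := by linarith
  rw [ha']
  match_scalars <;> field_simp <;> ring

/-- In a finite-dimensional real normed vector space, every point of a
convex set `C` lies in the intrinsic (relative) interior of exactly one face (convex
extreme subset) of `C`; consequently `C` is the disjoint union of the relative
interiors of its faces. -/
theorem stmt5 (E : Type*) [NormedAddCommGroup E] [NormedSpace ℝ E]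
    [FiniteDimensional ℝ E] (C : Set E) (hC : Convex ℝ C) :
    ∀ x ∈ C, ∃! F : Set E,
      Convex ℝ F ∧ IsExtreme ℝ C F ∧ x ∈ intrinsicInterior ℝ F := by
  intro x hx
  have hconv := minFace_convex hC hx
  have hext := minFace_extreme hC x
  have hxF : x ∈ minFace C x := ⟨hx, 1, one_pos, by simpa using hx⟩
  refine ⟨minFace C x, ⟨hconv, hext, ?_⟩, ?_⟩
  · obtain ⟨p, hp⟩ := Set.Nonempty.intrinsicInterior hconv ⟨x, hxF⟩
    obtain ⟨hpC, ε, hε, hq⟩ := intrinsicInterior_subset hp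
    have hseg : x ∈ openSegment ℝ p (x + ε • (x - p)) := by
      refine ⟨ε / (1 + ε), 1 / (1 + ε), by positivity, by positivity, by field_simp; ring, ?_⟩
      match_scalars <;> field_simp <;> ring
    exact relint_segment hconv hp
      (hext.left_mem_of_mem_openSegment hq hpC hxF (by rwa [openSegment_symm])) hseg
  · rintro G ⟨-, hG, hxG⟩
    refine Set.Subset.antisymm (relint_face_subset hG hext hxG hxF) ?_
    rintro y ⟨hy, ε, hε, hq⟩
    refine hG.left_mem_of_mem_openSegment hy hq (intrinsicInterior_subset hxG) ?_
    refine ⟨ε / (1 + ε), 1 / (1 + ε), by positivity, by positivity, by field_simp; ring, ?_⟩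
    match_scalars <;> field_simp <;> ring
end

section
/- Let S be an additive commutative monoid and let F ⊆ S be a face of S, i.e., a submonoid such that a + b ∈ F implies a ∈ F and b ∈ F. Let A denote the set of additive monoid homomorphisms f : S → ℝ≥0∞ whose set of finite values is exactly F (that is, f(s) ≠ ∞ if and only if s ∈ F), with the topology of pointwise convergence. Then the restriction map f ↦ f|_F is a homeomorphism from A onto the space Hom(F, ℝ≥0) of additive monoid homomorphisms F → ℝ≥0, with the topology of pointwise convergence; its inverse extends a homomorphism on F by the value ∞ on S ∖ F. -/
open scoped ENNReal NNReal
open Classical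

/-- Let `F` be a face of an additive commutative monoid `S`. The set `A` of
additive monoid homomorphisms `f : S → ℝ≥0∞` whose set of finite values is exactly `F`
(with the topology of pointwise convergence) is homeomorphic to `Hom(F, ℝ≥0)` via the
restriction map `f ↦ f|_F`, whose inverse extends a homomorphism on `F` by `∞` on
`S ∖ F`. -/
theorem stmt7 (S : Type*) [AddCommMonoid S] (F : AddSubmonoid S)
    (hF : ∀ a b : S, a + b ∈ F → a ∈ F ∧ b ∈ F) :
    ∃ e : {f : S → ℝ≥0∞ //
            (f 0 = 0 ∧ ∀ a b : S, f (a + b) = f a + f b) ∧ ∀ s : S, f s ≠ ∞ ↔ s ∈ F} ≃ₜ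
          {g : F → ℝ≥0 // g 0 = 0 ∧ ∀ a b : F, g (a + b) = g a + g b},
      (∀ f (s : F), ((e f).1 s : ℝ≥0∞) = f.1 (s : S)) ∧
      (∀ g (s : S), (e.symm g).1 s =
        if hs : s ∈ F then ((g.1 ⟨s, hs⟩ : ℝ≥0) : ℝ≥0∞) else ∞) := by
  refine ⟨{
    toFun := fun f => ⟨fun s => (f.1 (s : S)).toNNReal, ?_, ?_⟩
    invFun := fun g => ⟨fun s => if hs : s ∈ F then ((g.1 ⟨s, hs⟩ : ℝ≥0) : ℝ≥0∞) else ∞,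
      ⟨?_, ?_⟩, ?_⟩
    left_inv := ?_
    right_inv := ?_
    continuous_toFun := ?_
    continuous_invFun := ?_ }, ?_, ?_⟩
  · simp [f.2.1.1]
  · intro a b
    have ha := (f.2.2 a).2 a.2
    have hb := (f.2.2 b).2 b.2
    simp only [AddSubmonoid.coe_add, f.2.1.2]
    exact ENNReal.toNNReal_add ha hb
  · beta_reduce
    rw [dif_pos F.zero_mem]
    exact_mod_cast g.2.1
  · intro a b
    beta_reduce
    by_cases ha : a ∈ F
    · by_cases hb : b ∈ F
      · rw [dif_pos ha, dif_pos hb, dif_pos (F.add_mem ha hb)]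
        exact_mod_cast g.2.2 ⟨a, ha⟩ ⟨b, hb⟩
      · rw [dif_neg hb, dif_neg (fun h => hb (hF a b h).2), add_top]
    · rw [dif_neg ha, dif_neg (fun h => ha (hF a b h).1), top_add]
  · intro s
    by_cases hs : s ∈ F <;> simp [hs]
  · intro f
    apply Subtype.ext
    funext s
    by_cases hs : s ∈ F
    · simp only [dif_pos hs]
      exact ENNReal.coe_toNNReal ((f.2.2 s).2 hs)
    · simp only [dif_neg hs]
      by_contra h
      exact hs ((f.2.2 s).1 (Ne.symm h))
  · intro g
    apply Subtype.ext
    funext s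
    simp
  · refine Continuous.subtype_mk (continuous_pi fun s => ?_) _
    rw [continuous_iff_continuousAt]
    intro f
    have h1 : ContinuousAt ENNReal.toNNReal (f.1 (s : S)) :=
      ENNReal.tendsto_toNNReal ((f.2.2 s).2 s.2)
    have h2 : Continuous fun f : {f : S → ℝ≥0∞ //
        (f 0 = 0 ∧ ∀ a b : S, f (a + b) = f a + f b) ∧ ∀ s : S, f s ≠ ∞ ↔ s ∈ F} =>
        f.1 (s : S) := (continuous_apply (s : S)).comp continuous_subtype_val
    exact ContinuousAt.comp (f := fun f : {f : S → ℝ≥0∞ //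
        (f 0 = 0 ∧ ∀ a b : S, f (a + b) = f a + f b) ∧ ∀ s : S, f s ≠ ∞ ↔ s ∈ F} =>
        f.1 (s : S)) h1 h2.continuousAt
  · refine Continuous.subtype_mk (continuous_pi fun s => ?_) _
    by_cases hs : s ∈ F
    · simp only [dif_pos hs]
      exact ENNReal.continuous_coe.comp
        ((continuous_apply (⟨s, hs⟩ : F)).comp continuous_subtype_val)
    · simp only [dif_neg hs]
      exact continuous_const
  · intro f s
    exact ENNReal.coe_toNNReal ((f.2.2 s).2 s.2)
  · intro g s
    rfl
end

section
/- Let n ≥ 1 and let S be an additive submonoid of ℤⁿ (functions Fin n → ℤ) whose group closure is all of ℤⁿ (i.e., the subgroup of ℤⁿ generated by S equals ℤⁿ). Let σ = {x ∈ ℝⁿ : Σ_i x(i)·s(i) ≥ 0 for all s ∈ S} be the dual cone of S, with its subspace topology from ℝⁿ. Then the map sending x ∈ σ to the homomorphism s ↦ Σ_i x(i)·s(i) is a homeomorphism from σ onto the space Hom(S, ℝ≥0) of additive monoid homomorphisms S → ℝ≥0, with the topology of pointwise convergence. -/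
open scoped NNReal

theorem exists_diff {n : ℕ} (S : AddSubmonoid (Fin n → ℤ))
    (hS : AddSubgroup.closure (S : Set (Fin n → ℤ)) = ⊤) (v : Fin n → ℤ) :
    ∃ p : S × S, v = (p.1 : Fin n → ℤ) - p.2 := by
  have hv : v ∈ AddSubgroup.closure (S : Set (Fin n → ℤ)) := by rw [hS]; trivial
  induction hv using AddSubgroup.closure_induction with
  | mem x hx => exact ⟨(⟨x, hx⟩, 0), by simp⟩
  | zero => exact ⟨(0, 0), by simp⟩
  | add x y _ _ hx hy =>
    obtain ⟨p, rfl⟩ := hx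
    obtain ⟨q, rfl⟩ := hy
    exact ⟨(p.1 + q.1, p.2 + q.2), by push_cast; abel⟩
  | neg x _ hx =>
    obtain ⟨p, rfl⟩ := hx
    exact ⟨(p.2, p.1), by abel⟩

theorem diff_wd {n : ℕ} (S : AddSubmonoid (Fin n → ℤ)) (f : S → ℝ≥0)
    (hf : ∀ a b : S, f (a + b) = f a + f b) (a b c d : S)
    (h : (a : Fin n → ℤ) - b = c - d) : (f a : ℝ) - f b = f c - f d := by
  have h1 : a + d = c + b := by
    apply Subtype.ext
    push_cast
    exact sub_eq_sub_iff_add_eq_add.mp h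
  have h2 := congrArg (fun z => (f z : ℝ)) h1
  simp only [hf, NNReal.coe_add] at h2
  linarith

theorem hom_formula {n : ℕ} (S : AddSubmonoid (Fin n → ℤ))
    (p : (Fin n → ℤ) → S × S) (hp : ∀ v, v = ((p v).1 : Fin n → ℤ) - (p v).2)
    (f : S → ℝ≥0) (h0 : f 0 = 0) (hf : ∀ a b : S, f (a + b) = f a + f b) (s : S) :
    ∑ i, ((f (p (Pi.single i 1)).1 : ℝ) - f (p (Pi.single i 1)).2) *
      ((s : Fin n → ℤ) i : ℝ) = f s := by
  let g : (Fin n → ℤ) →+ ℝ := AddMonoidHom.mk' (fun v => (f (p v).1 : ℝ) - f (p v).2) (by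
    intro u v
    have := diff_wd S f hf (p (u + v)).1 (p (u + v)).2
      ((p u).1 + (p v).1) ((p u).2 + (p v).2) (by
        rw [← hp]
        push_cast
        rw [add_sub_add_comm, ← hp, ← hp])
    simp only [hf, NNReal.coe_add] at this
    linarith)
  have hg : g s = f s := by
    have := diff_wd S f hf (p s).1 (p s).2 s 0 (by rw [← hp]; simp)
    rw [h0, NNReal.coe_zero, sub_zero] at this
    exact this
  rw [← hg]
  conv_rhs => rw [pi_eq_sum_univ' (s : Fin n → ℤ), map_sum]
  refine Finset.sum_congr rfl fun i _ => ?_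
  rw [map_zsmul, zsmul_eq_mul, mul_comm]
  have : (fun j => if j = i then (1 : ℤ) else 0) = Pi.single i 1 := by
    ext j; simp [Pi.single_apply]
  first | rw [this] | skip
  try rfl

/-- Let `S` be an additive submonoid of `ℤⁿ` (for `n ≥ 1`) generating `ℤⁿ`
as a group, and let `σ = {x ∈ ℝⁿ : Σ_i x i * s i ≥ 0 for all s ∈ S}` be its dual cone.
Then `x ↦ (s ↦ Σ_i x i * s i)` is a homeomorphism from `σ` onto the space
`Hom(S, ℝ≥0)` of additive monoid homomorphisms with the topology of pointwise
convergence. -/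
theorem stmt8 (n : ℕ) (hn : 1 ≤ n) (S : AddSubmonoid (Fin n → ℤ))
    (hS : AddSubgroup.closure (S : Set (Fin n → ℤ)) = ⊤) :
    ∃ e : {x : Fin n → ℝ // ∀ s ∈ S, 0 ≤ ∑ i, x i * (s i : ℝ)} ≃ₜ
          {f : S → ℝ≥0 // f 0 = 0 ∧ ∀ a b : S, f (a + b) = f a + f b},
      ∀ x (s : S), ((e x).1 s : ℝ) = ∑ i, x.1 i * ((s : Fin n → ℤ) i : ℝ) := by
  choose p hp using exists_diff S hS
  refine ⟨{ toFun := fun x => ⟨fun s => ⟨∑ i, x.1 i * ((s : Fin n → ℤ) i : ℝ), x.2 s s.2⟩,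
              ?_, ?_⟩
            invFun := fun f => ⟨fun i => (f.1 (p (Pi.single i 1)).1 : ℝ) -
              f.1 (p (Pi.single i 1)).2, ?_⟩
            left_inv := ?_
            right_inv := ?_
            continuous_toFun := ?_
            continuous_invFun := ?_ }, ?_⟩
  · apply NNReal.eq
    show ∑ i, x.1 i * (((0 : S) : Fin n → ℤ) i : ℝ) = 0
    simp
  · intro a b
    apply NNReal.eq
    show ∑ i, x.1 i * (((a + b : S) : Fin n → ℤ) i : ℝ) =
      ∑ i, x.1 i * ((a : Fin n → ℤ) i : ℝ) + ∑ i, x.1 i * ((b : Fin n → ℤ) i : ℝ)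
    simp [mul_add, Finset.sum_add_distrib]
  · intro s hs
    rw [hom_formula S p hp f.1 f.2.1 f.2.2 ⟨s, hs⟩]
    exact NNReal.coe_nonneg _
  · intro x
    apply Subtype.ext
    funext i
    show ∑ j, x.1 j * (((p (Pi.single i 1)).1 : Fin n → ℤ) j : ℝ) -
        ∑ j, x.1 j * (((p (Pi.single i 1)).2 : Fin n → ℤ) j : ℝ) = x.1 i
    rw [← Finset.sum_sub_distrib]
    have h : ∀ j, x.1 j * (((p (Pi.single i 1)).1 : Fin n → ℤ) j : ℝ) -
        x.1 j * (((p (Pi.single i 1)).2 : Fin n → ℤ) j : ℝ) =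
        x.1 j * ((Pi.single i 1 : Fin n → ℤ) j : ℝ) := by
      intro j
      have := congrFun (hp (Pi.single i 1)) j
      rw [this, Pi.sub_apply]
      push_cast
      ring
    refine (Finset.sum_congr rfl fun j _ => h j).trans ?_
    simp [Pi.single_apply]
  · intro f
    apply Subtype.ext
    funext s
    apply NNReal.eq
    exact hom_formula S p hp f.1 f.2.1 f.2.2 s
  · refine Continuous.subtype_mk (continuous_pi fun s => Continuous.subtype_mk ?_ _) _
    exact continuous_finsetSum _ fun i _ =>
      ((continuous_apply i).comp continuous_subtype_val).mul continuous_const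
  · refine Continuous.subtype_mk (continuous_pi fun i => ?_) _
    have h : ∀ s : S, Continuous fun f : {f : S → ℝ≥0 // f 0 = 0 ∧
        ∀ a b : S, f (a + b) = f a + f b} => (f.1 s : ℝ) := fun s =>
      NNReal.continuous_coe.comp ((continuous_apply s).comp continuous_subtype_val)
    exact (h _).sub (h _)
  · intro x s
    rfl
end

section
/- Let G be a stable weighted graph with legs and let e be an edge of G whose two endpoints u and v are distinct. Let G/e be the weighted graph with legs obtained by deleting e, identifying u and v to a single vertex of weight h(u) + h(v), and keeping all other vertices, edges (with induced endpoints), legs (with induced attachments), and weights. Then G/e is stable. -/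
open Classical

/-- A (weighted) graph with edge-endpoint map `ends : E → Sym2 V` is connected if `V` is
nonempty and the equivalence relation generated by "`a` and `b` are the two endpoints of
some edge" has a single class. -/
def GraphConnected {V E : Type*} (ends : E → Sym2 V) : Prop :=
  Nonempty V ∧ ∀ a b : V, Relation.EqvGen (fun x y => ∃ e : E, ends e = s(x, y)) a b

/-- The multiplicity of a vertex `v` in an unordered pair of endpoints: `2` for a loop
at `v`, `1` if `v` is one of two distinct endpoints, `0` otherwise. -/
noncomputable def endMult {V : Type*} (v : V) (p : Sym2 V) : ℕ :=
  Sym2.lift ⟨fun a b => (if a = v then 1 else 0) + (if b = v then 1 else 0),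
    fun _ _ => add_comm _ _⟩ p

/-- The valence of a vertex `v`: the number of incidences of edges at `v` (loops counted
twice) plus the number of legs attached at `v`. -/
noncomputable def valence {V E L : Type*} (ends : E → Sym2 V) (leg : L → V) (v : V) : ℕ :=
  (∑ᶠ e : E, endMult v (ends e)) + Nat.card {l : L // leg l = v}

/-- A weighted graph with legs is stable if it is connected and every vertex of weight
`0` has valence at least `3` and every vertex of weight `1` has valence at least `1`. -/
def GraphStable {V E L : Type*} (ends : E → Sym2 V) (leg : L → V) (h : V → ℕ) : Prop :=
  GraphConnected ends ∧ ∀ v : V,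
    (h v = 0 → 3 ≤ valence ends leg v) ∧ (h v = 1 → 1 ≤ valence ends leg v)

theorem endMult_mk {V : Type*} (w a b : V) : endMult w s(a, b) =
    (if a = w then 1 else 0) + (if b = w then 1 else 0) := rfl

theorem sum_split {E : Type} [Finite E] (e : E) (g : E → ℕ) :
    ∑ᶠ x, g x = g e + ∑ᶠ x : {x : E // x ≠ e}, g x.1 := by
  haveI := Fintype.ofFinite E
  rw [finsum_eq_sum_of_fintype, finsum_eq_sum_of_fintype]
  exact Fintype.sum_eq_add_sum_subtype_ne g e

theorem card_split {L V : Type} [Finite L] (leg : L → V) (u v : V) (huv : u ≠ v) :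
    Nat.card {l : L // leg l = u ∨ leg l = v} =
      Nat.card {l : L // leg l = u} + Nat.card {l : L // leg l = v} := by
  haveI := Fintype.ofFinite L
  simp only [Nat.card_eq_fintype_card]
  apply Fintype.card_subtype_or_disjoint
  rw [Pi.disjoint_iff]
  intro l
  rw [Prop.disjoint_iff]
  intro hc
  exact huv (hc.1.symm.trans hc.2)

theorem stmt11 {V E L : Type} [Finite V] [Finite E] [Finite L]
    (ends : E → Sym2 V) (leg : L → V) (h : V → ℕ)
    (hstable : GraphStable ends leg h)
    (e : E) (u v : V) (huv : u ≠ v) (he : ends e = s(u, v)) :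
    GraphStable
      (fun e' : {x : E // x ≠ e} =>
        Sym2.map (fun w => if hw : w = v then (⟨u, huv⟩ : {w : V // w ≠ v}) else ⟨w, hw⟩)
          (ends e'.1))
      (fun l : L => if hw : leg l = v then (⟨u, huv⟩ : {w : V // w ≠ v}) else ⟨leg l, hw⟩)
      (fun w => if (w : V) = u then h u + h v else h (w : V)) := by
  obtain ⟨⟨_, hconn⟩, hval⟩ := hstable
  set f : V → {w : V // w ≠ v} :=
    fun w => if hw : w = v then (⟨u, huv⟩ : {w : V // w ≠ v}) else ⟨w, hw⟩ with hf
  have fv : f v = ⟨u, huv⟩ := by simp [hf]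
  have fn : ∀ w (hw : w ≠ v), f w = ⟨w, hw⟩ := fun w hw => by simp [hf, hw]
  have hleg : (fun l : L => if hw : leg l = v then (⟨u, huv⟩ : {w : V // w ≠ v})
      else ⟨leg l, hw⟩) = fun l => f (leg l) := rfl
  rw [hleg]
  have feq_u : ∀ a, f a = ⟨u, huv⟩ ↔ a = u ∨ a = v := by
    intro a
    by_cases ha : a = v
    · subst ha; simp [fv]
    · rw [fn a ha]; simp [ha]
  have feq_n : ∀ a w (hw : w ≠ v), w ≠ u → (f a = ⟨w, hw⟩ ↔ a = w) := by
    intro a w hw hwu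
    by_cases ha : a = v
    · subst ha; rw [fv]; simp [hwu.symm, hw.symm]
    · rw [fn a ha]; simp
  refine ⟨⟨⟨⟨u, huv⟩⟩, ?_⟩, ?_⟩
  · have key : ∀ a b, Relation.EqvGen (fun x y => ∃ e : E, ends e = s(x, y)) a b →
        Relation.EqvGen (fun x y => ∃ e' : {x : E // x ≠ e},
          Sym2.map f (ends e'.1) = s(x, y)) (f a) (f b) := by
      intro a b hab
      induction hab with
      | rel x y hxy =>
        obtain ⟨e', he'⟩ := hxy
        by_cases hee : e' = e
        · subst hee
          rw [he, Sym2.eq_iff] at he'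
          have fu := fn u huv
          have : f x = f y := by
            rcases he' with ⟨rfl, rfl⟩ | ⟨rfl, rfl⟩ <;> rw [fu, fv]
          rw [this]
          exact Relation.EqvGen.refl _
        · exact Relation.EqvGen.rel _ _ ⟨⟨e', hee⟩, by simp [he']⟩
      | refl x => exact Relation.EqvGen.refl _
      | symm x y _ ih => exact Relation.EqvGen.symm _ _ ih
      | trans x y z _ _ ih1 ih2 => exact Relation.EqvGen.trans _ _ _ ih1 ih2
    rintro ⟨a, ha⟩ ⟨b, hb⟩
    have := key a b (hconn a b)
    rwa [fn a ha, fn b hb] at this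
  · rintro ⟨w, hw⟩
    by_cases hwu : w = u
    · subst hwu
      have hm : ∀ p : Sym2 V, endMult (⟨w, hw⟩ : {w : V // w ≠ v}) (Sym2.map f p) =
          endMult w p + endMult v p := by
        intro p
        induction p with
        | _ a b =>
          rw [Sym2.map_mk, endMult_mk, endMult_mk, endMult_mk]
          simp only [feq_u]
          grind
      have hV : valence (fun e' : {x : E // x ≠ e} => Sym2.map f (ends e'.1))
          (fun l => f (leg l)) ⟨w, hw⟩ + 2 = valence ends leg w + valence ends leg v := by
        unfold valence
        rw [sum_split e (fun x => endMult w (ends x)),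
          sum_split e (fun x => endMult v (ends x))]
        simp only [hm, feq_u, he, endMult_mk]
        rw [card_split leg w v huv, finsum_add_distrib (Set.toFinite _) (Set.toFinite _)]
        simp only [if_pos, if_neg huv, if_neg huv.symm]
        omega
      have h1 := hval w
      have h2 := hval v
      simp only [if_true]
      constructor <;> intro h0 <;> omega
    · have hm : ∀ p : Sym2 V, endMult (⟨w, hw⟩ : {w : V // w ≠ v}) (Sym2.map f p) =
          endMult w p := by
        intro p
        induction p with
        | _ a b =>
          rw [Sym2.map_mk, endMult_mk, endMult_mk]
          simp only [feq_n _ w hw hwu]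
      have hV : valence (fun e' : {x : E // x ≠ e} => Sym2.map f (ends e'.1))
          (fun l => f (leg l)) ⟨w, hw⟩ = valence ends leg w := by
        unfold valence
        rw [sum_split e (fun x => endMult w (ends x))]
        simp only [hm, feq_n _ w hw hwu, he, endMult_mk]
        simp [Ne.symm hwu, Ne.symm hw]
      rw [hV]
      simp only [if_neg hwu]
      exact hval w
end
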